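/- Let m ≥ 4, let P be a centrally symmetric convex 2m-gon, and let P + X be a k-fold translative tiling of the plane. If v is a vertex of some translate P + x_j (i.e. v ∈ V + X) and G is an edge of some translate P + x_j' having v as one of its two endpoints, then there exist at least ⌈(m−3)/2⌉ distinct indices i such that v ∈ ∂(P) + x_i and G \ {v} ⊆ int(P) + x_i. -/

import Mathlib

/-!
Let `[p, p']` be an edge of `P`, let `g = p' - p`, and let `n` point from the edge into `P`. The
points `v + e • g + t • n` with `0 < t ≪ e ≪ 1` are covered by exactly `k` translates, namely those
in which `v` is an interior point, a point of the edge other than `p'`, or a boundary point from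
which `g` leads into the interior. Write `L g` for the number of translates of the last kind and
`c z` for the number of translates in which `v` corresponds to the vertex `z`. Traversing the edge
in both directions gives `L g + c p = L (-g) + c p'`. Together with the same identity for the
opposite edge, this shows that the sum of `c` over a pair of antipodal vertices does not change
along edges, hence is the same number `c₀` for all pairs. From each of the `2m - 4` vertices away
from the two edges, `g` or `-g` leads into the interior. Thus
`m c₀ ≤ L g + L (-g) + 2 c₀ ≤ 2 L g + 3 c₀`, and `c₀ ≥ 1` because `v` is a vertex of some translate.
-/

open Pointwise

/-- `K + X` is a `k`-fold translative tiling of the plane: the translate multiset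
`(x i)` is discrete, every point of the plane belongs to at least `k` of the translates
`K + x i`, and every point belongs to at most `k` of the translates `interior K + x i`
(multiplicity counted over the index set). -/
def IsKFoldTranslativeTiling {ι : Type} (K : Set (ℝ × ℝ)) (x : ι → ℝ × ℝ) (k : ℕ) : Prop :=
  (∀ R : ℝ, {i : ι | ‖x i‖ ≤ R}.Finite) ∧
  (∀ p : ℝ × ℝ, ∃ s : Finset ι, k ≤ s.card ∧ ∀ i ∈ s, p - x i ∈ K) ∧
  (∀ p : ℝ × ℝ, ∀ s : Finset ι, (∀ i ∈ s, p - x i ∈ interior K) → s.card ≤ k)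

/-- `P` is a (two-dimensional) convex polygon whose vertex set is the finite set `V`:
`P` is the convex hull of `V`, every element of `V` is an extreme point of `P`
(so `V` is exactly the vertex set), and `P` has nonempty interior. -/
def IsConvexPolygon (P : Set (ℝ × ℝ)) (V : Finset (ℝ × ℝ)) : Prop :=
  P = convexHull ℝ (V : Set (ℝ × ℝ)) ∧
  (∀ v ∈ V, v ∈ Set.extremePoints ℝ P) ∧
  (interior P).Nonempty

/-- `P` is symmetric about some point `c`. -/
def IsCentrallySymmetric (P : Set (ℝ × ℝ)) : Prop :=
  ∃ c : ℝ × ℝ, ∀ p ∈ P, 2 • c - p ∈ P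

/-- The segment `[a, b]` is an edge of the convex polygon `P` with vertex set `V`. -/
def IsEdge (P : Set (ℝ × ℝ)) (V : Finset (ℝ × ℝ)) (a b : ℝ × ℝ) : Prop :=
  a ∈ V ∧ b ∈ V ∧ a ≠ b ∧ segment ℝ a b ⊆ frontier P

open Filter Topology Module

section Segment

variable {𝕜 E : Type*} [Ring 𝕜] [PartialOrder 𝕜] [IsOrderedRing 𝕜] [AddCommGroup E] [Module 𝕜 E]

theorem sub_mem_segment_sub_iff (d x a b : E) :
    d - x ∈ segment 𝕜 (d - a) (d - b) ↔ x ∈ segment 𝕜 a b := by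
  have himage := image_segment 𝕜 (AffineEquiv.constVSub 𝕜 d : E →ᵃ[𝕜] E) a b
  simp only [AffineEquiv.coe_coe, AffineEquiv.coe_constVSub, vsub_eq_sub] at himage
  rw [← himage, (sub_right_injective : Function.Injective (d - ·)).mem_set_image]

theorem sub_mem_openSegment_sub_iff (d x a b : E) :
    d - x ∈ openSegment 𝕜 (d - a) (d - b) ↔ x ∈ openSegment 𝕜 a b := by
  have himage := image_openSegment 𝕜 (AffineEquiv.constVSub 𝕜 d : E →ᵃ[𝕜] E) a b
  simp only [AffineEquiv.coe_coe, AffineEquiv.coe_constVSub, vsub_eq_sub] at himage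
  rw [← himage, (sub_right_injective : Function.Injective (d - ·)).mem_set_image]

end Segment

section NormedSpace

variable {E : Type*} [NormedAddCommGroup E] [NormedSpace ℝ E]
  {P U : Set E} {f : StrongDual ℝ E} {d g n p p' q z : E}

theorem apply_lt_of_mem_interior {c : ℝ} (hf : f ≠ 0) (hc : ∀ y ∈ P, f y ≤ c)
    (hq : q ∈ interior P) : f q < c := by
  have hsub : f '' interior P ⊆ interior (Set.Iic c) :=
    interior_maximal (Set.image_subset_iff.2 fun y hy => hc y (interior_subset hy))
      (f.isOpenMap_of_ne_zero hf _ isOpen_interior)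
  rw [interior_Iic] at hsub
  exact hsub ⟨q, hq, rfl⟩

theorem exists_mem_toExposed_of_notMem_interior (hP : Convex ℝ P) (hint : (interior P).Nonempty)
    (hq : q ∈ P) (hqint : q ∉ interior P) : ∃ f : StrongDual ℝ E, f ≠ 0 ∧ q ∈ f.toExposed P := by
  obtain ⟨f, hf, hmax⟩ := geometric_hahn_banach_of_nonempty_interior_point hP hqint hint
  exact ⟨f, hf, hq, hmax⟩

theorem exists_endpoints_mem_toExposed_of_notMem_interior {a b : E} (hP : Convex ℝ P)
    (hint : (interior P).Nonempty) (ha : a ∈ P) (hb : b ∈ P) (hq : q ∈ openSegment ℝ a b)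
    (hqint : q ∉ interior P) :
    ∃ f : StrongDual ℝ E, f ≠ 0 ∧ a ∈ f.toExposed P ∧ b ∈ f.toExposed P := by
  obtain ⟨f, hf, hfq⟩ := exists_mem_toExposed_of_notMem_interior hP hint
    (hP.openSegment_subset ha hb hq) hqint
  have hext : IsExtreme ℝ P (f.toExposed P) := ContinuousLinearMap.toExposed.isExposed.isExtreme
  exact ⟨f, hf, hext.2 ha hb hfq hq, hext.2 hb ha hfq (openSegment_symm ℝ a b ▸ hq)⟩

/-- The boundary points of `P` from which the displacement `g` leads into the interior of `P`. For
convex `P` the whole half-open segment `(q, q + g]` then lies in the interior. -/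
def inwardFrontier (P : Set E) (g : E) : Set E := {q ∈ frontier P | q + g ∈ interior P}

omit [NormedSpace ℝ E] in
theorem inwardFrontier_subset (hP : IsClosed P) : inwardFrontier P g ⊆ P :=
  fun _ hq => hP.frontier_subset hq.1

omit [NormedSpace ℝ E] in
theorem disjoint_interior_inwardFrontier : Disjoint (interior P) (inwardFrontier P g) :=
  disjoint_interior_frontier.mono_right fun _ hq => hq.1

theorem mem_interior_of_mem_segment_inwardFrontier (hP : Convex ℝ P)
    (hq : q ∈ inwardFrontier P g) (hz : z ∈ segment ℝ q (q + g)) (hzq : z ≠ q) :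
    z ∈ interior P := by
  by_cases hzg : z = q + g
  · exact hzg ▸ hq.2
  · exact hP.openSegment_closure_interior_subset_interior (frontier_subset_closure hq.1) hq.2
      (mem_openSegment_of_ne_left_right hzq.symm (Ne.symm hzg) hz)

theorem sub_smul_notMem_of_mem_inwardFrontier {e : ℝ} (hP : Convex ℝ P)
    (hq : q ∈ inwardFrontier P g) (he : 0 < e) : q - e • g ∉ P := fun hmem => by
  have hend : q - e • g + (1 + e) • g ∈ interior P := by
    convert hq.2 using 1
    module
  refine hq.1.2 ?_
  convert hP.add_smul_mem_interior hmem hend (t := e / (1 + e))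
    ⟨by positivity, (div_le_one (by positivity)).2 (by linarith)⟩ using 1
  rw [smul_smul, div_mul_cancel₀ _ (by positivity), sub_add_cancel]

/-- The filter of displacements `e • g + t • n` with `0 < t ≪ e ≪ 1`: an infinitesimal step along
`g` followed by a step along `n` which is infinitesimal relative to the first one. -/
def lexGerm (g n : E) : Filter E :=
  map (fun a : ℝ × ℝ => a.1 • g + a.2 • n) ((𝓝[>] 0).curry (𝓝[>] 0))

theorem eventually_lexGerm {r : E → Prop} :
    (∀ᶠ y in lexGerm g n, r y) ↔
      ∀ᶠ e : ℝ in 𝓝[>] 0, ∀ᶠ t : ℝ in 𝓝[>] 0, r (e • g + t • n) :=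
  Iff.rfl

instance lexGerm_neBot : NeBot (lexGerm g n) := by
  refine ⟨fun h => ?_⟩
  have hfalse : ∀ᶠ _ in lexGerm g n, False := eventually_false_iff_eq_bot.2 h
  obtain ⟨_, he⟩ := (eventually_lexGerm.1 hfalse).exists
  exact he.exists.choose_spec

theorem lexGerm_le_nhds_zero : lexGerm g n ≤ 𝓝 0 := by
  have hcont : Continuous fun a : ℝ × ℝ => a.1 • g + a.2 • n := by fun_prop
  have hle : (𝓝[>] (0 : ℝ)).curry (𝓝[>] (0 : ℝ)) ≤ 𝓝 (0, 0) :=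
    curry_le_prod.trans
      ((prod_mono nhdsWithin_le_nhds nhdsWithin_le_nhds).trans nhds_prod_eq.ge)
  have htendsto := (hcont.tendsto (0, 0)).mono_left hle
  simp only [zero_smul, add_zero] at htendsto
  exact htendsto

omit [NormedSpace ℝ E] in
theorem eventually_add_mem_of_le_nhds_zero {l : Filter E} (hl : l ≤ 𝓝 0) (hU : IsOpen U)
    (hq : q ∈ U) : ∀ᶠ y in l, q + y ∈ U := by
  have hcont : Tendsto (q + ·) (𝓝 0) (𝓝 q) := by
    simpa using (continuous_const_add q).tendsto 0
  exact hl (hcont (hU.mem_nhds hq))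

theorem eventually_lexGerm_add_mem (hU : IsOpen U) (h : ∀ᶠ e : ℝ in 𝓝[>] 0, q + e • g ∈ U) :
    ∀ᶠ y in lexGerm g n, q + y ∈ U := by
  rw [eventually_lexGerm]
  filter_upwards [h] with e he
  have hcont : Tendsto (fun t : ℝ => q + (e • g + t • n)) (𝓝 0) (𝓝 (q + e • g)) := by
    have : Continuous fun t : ℝ => q + (e • g + t • n) := by fun_prop
    simpa using this.tendsto 0
  exact nhdsWithin_le_nhds (hcont (hU.mem_nhds he))

/-- A compact convex set with interior points which is symmetric about `d / 2`. The reflection is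
written as `q ↦ d - q`, so that vertices and edges are reflected without halving. -/
structure IsSymmetricConvexBody (P : Set E) (d : E) : Prop where
  convex : Convex ℝ P
  isCompact : IsCompact P
  interior_nonempty : (interior P).Nonempty
  sub_mem : ∀ q ∈ P, d - q ∈ P

namespace IsSymmetricConvexBody

variable (hB : IsSymmetricConvexBody P d)
include hB

theorem sub_mem_iff : d - q ∈ P ↔ q ∈ P :=
  ⟨fun h => by simpa using hB.sub_mem _ h, hB.sub_mem q⟩

theorem sub_mem_interior (hq : q ∈ interior P) : d - q ∈ interior P := by
  have hpre : (Homeomorph.subLeft d) ⁻¹' P = P := Set.ext fun _ => hB.sub_mem_iff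
  rw [← hpre, ← Homeomorph.preimage_interior]
  simpa using hq

theorem half_smul_mem_interior : (1 / 2 : ℝ) • d ∈ interior P := by
  obtain ⟨q, hq⟩ := hB.interior_nonempty
  convert hB.convex.interior hq (hB.sub_mem_interior hq) one_half_pos.le one_half_pos.le
    (add_halves 1) using 1
  module

theorem sub_mem_extremePoints (hq : q ∈ P.extremePoints ℝ) : d - q ∈ P.extremePoints ℝ := by
  refine mem_extremePoints_iff_left.2 ⟨hB.sub_mem q hq.1, fun a ha b hb hab => ?_⟩
  have hseg : q ∈ openSegment ℝ (d - a) (d - b) := by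
    rw [← sub_mem_openSegment_sub_iff d]
    simpa using hab
  rw [← (mem_extremePoints_iff_left.1 hq).2 _ (hB.sub_mem a ha) _ (hB.sub_mem b hb) hseg,
    sub_sub_cancel]

end IsSymmetricConvexBody

/-- `[p, p']` is a nondegenerate edge of `P`, exposed by the functional `f`. -/
structure IsExposedEdge (P : Set E) (f : StrongDual ℝ E) (p p' : E) : Prop where
  functional_ne_zero : f ≠ 0
  ne : p ≠ p'
  toExposed_eq : f.toExposed P = segment ℝ p p'

namespace IsExposedEdge

variable (hpp' : IsExposedEdge P f p p')
include hpp'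

theorem left_mem_toExposed : p ∈ f.toExposed P :=
  hpp'.toExposed_eq ▸ left_mem_segment ℝ p p'

theorem symm : IsExposedEdge P f p' p :=
  ⟨hpp'.functional_ne_zero, hpp'.ne.symm, by rw [hpp'.toExposed_eq, segment_symm]⟩

theorem left_mem : p ∈ P := hpp'.left_mem_toExposed.1

theorem apply_le (hq : q ∈ P) : f q ≤ f p := hpp'.left_mem_toExposed.2 q hq

theorem apply_right : f p' = f p :=
  (hpp'.apply_le hpp'.symm.left_mem).antisymm (hpp'.symm.apply_le hpp'.left_mem)

theorem mem_segment_iff : q ∈ segment ℝ p p' ↔ q ∈ P ∧ f q = f p := by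
  rw [← hpp'.toExposed_eq]
  exact ⟨fun h => ⟨h.1, (hpp'.apply_le h.1).antisymm (h.2 p hpp'.left_mem)⟩,
    fun h => ⟨h.1, fun y hy => h.2 ▸ hpp'.apply_le hy⟩⟩

theorem segment_subset : segment ℝ p p' ⊆ P := fun _ hq => (hpp'.mem_segment_iff.1 hq).1

theorem right_add_smul_notMem {e : ℝ} (he : 0 < e) : p' + e • (p' - p) ∉ P := fun hmem => by
  have hseg : p' + e • (p' - p) ∈ segment ℝ p p' :=
    hpp'.mem_segment_iff.2 ⟨hmem, by simp [hpp'.apply_right]⟩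
  rw [segment_eq_image'] at hseg
  obtain ⟨s, ⟨-, hs⟩, heq⟩ := hseg
  have hzero : (1 + e - s) • (p' - p) = 0 := by
    rw [← sub_eq_zero.2 heq.symm]
    module
  exact smul_ne_zero (by linarith) (sub_ne_zero.2 hpp'.ne.symm) hzero

theorem disjoint_interior_segment : Disjoint (interior P) (segment ℝ p p') :=
  Set.disjoint_left.2 fun _ hqint hq =>
    (apply_lt_of_mem_interior hpp'.functional_ne_zero (fun _ => hpp'.apply_le) hqint).ne
      (hpp'.mem_segment_iff.1 hq).2

theorem disjoint_inwardFrontier_segment : Disjoint (inwardFrontier P (p' - p)) (segment ℝ p p') :=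
  Set.disjoint_left.2 fun q hqg hq => by
    have hlt := apply_lt_of_mem_interior hpp'.functional_ne_zero (fun _ => hpp'.apply_le) hqg.2
    rw [map_add, map_sub, hpp'.apply_right, sub_self, add_zero] at hlt
    exact hlt.ne (hpp'.mem_segment_iff.1 hq).2

theorem apply_reflect_lt (hB : IsSymmetricConvexBody P d) : f (d - p) < f p := by
  have hlt := apply_lt_of_mem_interior hpp'.functional_ne_zero (fun y => hpp'.apply_le)
    hB.half_smul_mem_interior
  rw [map_smul, smul_eq_mul] at hlt
  rw [map_sub]
  linarith

theorem reflect (hB : IsSymmetricConvexBody P d) : IsExposedEdge P (-f) (d - p) (d - p') := by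
  refine ⟨neg_ne_zero.2 hpp'.functional_ne_zero, fun h => hpp'.ne (sub_right_injective h), ?_⟩
  ext q
  rw [← sub_mem_segment_sub_iff d, sub_sub_cancel, sub_sub_cancel, hpp'.mem_segment_iff,
    hB.sub_mem_iff]
  refine and_congr_right fun hq => ⟨fun hmax => ?_, fun hfq y hy => ?_⟩
  · have hle := hmax _ (hB.sub_mem _ hpp'.left_mem)
    have hge := hpp'.apply_le (hB.sub_mem _ hq)
    simp only [neg_apply, map_sub] at hle hge ⊢
    linarith
  · have hle := hpp'.apply_le (hB.sub_mem _ hy)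
    simp only [neg_apply, map_sub] at hfq hle ⊢
    linarith

end IsExposedEdge

end NormedSpace

section Plane

theorem exists_smul_eq_of_apply_eq_zero {K E : Type*} [Field K] [AddCommGroup E] [Module K E]
    [Fact (finrank K E = 2)] {f : Dual K E} {g z : E} (hf : f ≠ 0) (hg : g ≠ 0) (hfg : f g = 0)
    (hfz : f z = 0) : ∃ s : K, s • g = z := by
  have hdim : finrank K E = 2 := Fact.out
  have : FiniteDimensional K E := .of_finrank_pos (by omega)
  have hker : finrank K (LinearMap.ker f) = 1 := by
    have := Dual.finrank_ker_add_one_of_ne_zero hf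
    omega
  have hg' : (⟨g, hfg⟩ : LinearMap.ker f) ≠ 0 := fun h => hg (congrArg Subtype.val h)
  obtain ⟨s, hs⟩ := (finrank_eq_one_iff_of_nonzero' _ hg').1 hker ⟨z, hfz⟩
  exact ⟨s, congrArg Subtype.val hs⟩

variable {E : Type*} [NormedAddCommGroup E] [NormedSpace ℝ E] [Fact (finrank ℝ E = 2)]
  {P : Set E} {f w : StrongDual ℝ E} {a b d p p' q : E}

theorem toExposed_eq_segment (hP : Convex ℝ P) (hf : f ≠ 0) (hab : a ≠ b)
    (ha : a ∈ P.extremePoints ℝ) (hb : b ∈ P.extremePoints ℝ) (hfa : a ∈ f.toExposed P)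
    (hfb : b ∈ f.toExposed P) : f.toExposed P = segment ℝ a b := by
  refine subset_antisymm (fun q hq => ?_)
    ((ContinuousLinearMap.toExposed.isExposed.convex hP).segment_subset hfa hfb)
  have heq : ∀ y ∈ f.toExposed P, f y = f a := fun y hy => (hfa.2 y hy.1).antisymm (hy.2 a hfa.1)
  obtain ⟨s, hs⟩ := exists_smul_eq_of_apply_eq_zero (f := f.toLinearMap) (g := b - a) (z := q - a)
    (ContinuousLinearMap.coe_injective.ne hf) (sub_ne_zero.2 hab.symm)
    (by simp [heq b hfb]) (by simp [heq q hq])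
  have hcol : Collinear ℝ {a, b, q} := by
    refine (collinear_iff_of_mem (Set.mem_insert a _)).2 ⟨b - a, ?_⟩
    rintro y (rfl | rfl | rfl)
    exacts [⟨0, by simp⟩, ⟨1, by simp⟩, ⟨s, by simp [hs]⟩]
  rcases hcol.wbtw_or_wbtw_or_wbtw with h | h | h
  · rcases (mem_extremePoints_iff_forall_segment.1 hb).2 a ha.1 q hq.1 (mem_segment_iff_wbtw.2 h)
      with rfl | rfl
    exacts [absurd rfl hab, right_mem_segment ℝ _ _]
  · exact segment_symm ℝ b a ▸ mem_segment_iff_wbtw.2 h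
  · rcases (mem_extremePoints_iff_forall_segment.1 ha).2 q hq.1 b hb.1 (mem_segment_iff_wbtw.2 h)
      with rfl | rfl
    exacts [left_mem_segment ℝ _ _, absurd rfl hab]

theorem exists_isExposedEdge_of_mem_openSegment (hP : Convex ℝ P)
    (hint : (interior P).Nonempty) (hab : a ≠ b) (ha : a ∈ P.extremePoints ℝ)
    (hb : b ∈ P.extremePoints ℝ) (hq : q ∈ openSegment ℝ a b) (hqint : q ∉ interior P) :
    ∃ f, IsExposedEdge P f a b := by
  obtain ⟨f, hf, hfa, hfb⟩ := exists_endpoints_mem_toExposed_of_notMem_interior hP hint ha.1 hb.1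
    hq hqint
  exact ⟨f, hf, hab, toExposed_eq_segment hP hf hab ha hb hfa hfb⟩

namespace IsExposedEdge

variable (hpp' : IsExposedEdge P f p p') (hB : IsSymmetricConvexBody P d)
include hpp'

omit [Fact (finrank ℝ E = 2)] in
include hB in
theorem apply_inward_neg : f (d - p - p') < 0 := by
  rw [map_sub, hpp'.apply_right]
  exact sub_neg.2 (hpp'.apply_reflect_lt hB)

include hB in
theorem exists_coordinates (q : E) : ∃ s t : ℝ, q = p + s • (p' - p) + t • (d - p - p') := by
  have hn := (hpp'.apply_inward_neg hB).ne
  set t := (f q - f p) / f (d - p - p')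
  obtain ⟨s, hs⟩ := exists_smul_eq_of_apply_eq_zero (f := f.toLinearMap) (g := p' - p)
    (z := q - p - t • (d - p - p')) (ContinuousLinearMap.coe_injective.ne hpp'.functional_ne_zero)
    (sub_ne_zero.2 hpp'.ne.symm) (by simp [hpp'.apply_right])
    (by simp only [ContinuousLinearMap.coe_coe, map_sub _ (q - p), map_sub _ q, map_smul,
      smul_eq_mul, t, div_mul_cancel₀ _ hn, sub_self])
  exact ⟨s, t, by rw [hs]; abel⟩

include hB in
theorem subset_convexHull_parallelogram (hw : w ≠ 0) (hwp : p ∈ w.toExposed P)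
    (hwp' : d - p' ∈ w.toExposed P) : P ⊆ convexHull ℝ {p, p', d - p, d - p'} := by
  intro q hq
  obtain ⟨s, t, rfl⟩ := hpp'.exists_coordinates hB q
  have hfn := hpp'.apply_inward_neg hB
  have hfq := hpp'.apply_le hq
  have hfq' := hpp'.apply_le (hB.sub_mem _ hq)
  have hwn : w (d - p') = w p := (hwp.2 _ hwp'.1).antisymm (hwp'.2 _ hwp.1)
  have hwq := hwp.2 _ hq
  have hwq' := hwp.2 _ (hB.sub_mem _ hq)
  have hwd := apply_lt_of_mem_interior hw hwp.2 hB.half_smul_mem_interior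
  have hfp' := hpp'.apply_right
  simp only [map_add, map_sub, map_smul, smul_eq_mul, hfp'] at *
  have ht0 : 0 ≤ t := by nlinarith
  have ht1 : t ≤ 1 := by nlinarith
  have hs0 : 0 ≤ s := by nlinarith
  have hs1 : s ≤ 1 := by nlinarith
  have hconv := convex_convexHull ℝ ({p, p', d - p, d - p'} : Set E)
  have hlow : (1 - s) • p + s • p' ∈ convexHull ℝ {p, p', d - p, d - p'} :=
    hconv (subset_convexHull ℝ _ (by simp)) (subset_convexHull ℝ _ (by simp))
      (sub_nonneg.2 hs1) hs0 (sub_add_cancel 1 s)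
  have hhigh : (1 - s) • (d - p') + s • (d - p) ∈ convexHull ℝ {p, p', d - p, d - p'} :=
    hconv (subset_convexHull ℝ _ (by simp)) (subset_convexHull ℝ _ (by simp))
      (sub_nonneg.2 hs1) hs0 (sub_add_cancel 1 s)
  convert hconv hlow hhigh (sub_nonneg.2 ht1) ht0 (sub_add_cancel 1 t) using 1
  module

include hB in
theorem encard_extremePoints_le_four (hw : w ≠ 0) (hwp : p ∈ w.toExposed P)
    (hwp' : d - p' ∈ w.toExposed P) : (P.extremePoints ℝ).encard ≤ 4 := by
  have hsub : P.extremePoints ℝ ⊆ {p, p', d - p, d - p'} := by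
    have hPeq : P = convexHull ℝ {p, p', d - p, d - p'} := by
      refine (hpp'.subset_convexHull_parallelogram hB hw hwp hwp').antisymm
        (convexHull_min ?_ hB.convex)
      rintro q (rfl | rfl | rfl | rfl)
      exacts [hpp'.left_mem, hpp'.symm.left_mem, hB.sub_mem _ hpp'.left_mem, hwp'.1]
    rw [hPeq]
    exact extremePoints_convexHull_subset
  grw [hsub, Set.encard_insert_le, Set.encard_insert_le, Set.encard_insert_le, Set.encard_singleton]
  norm_num

include hB in
theorem openSegment_subset_interior (hcard : 4 < (P.extremePoints ℝ).encard) :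
    openSegment ℝ p (d - p') ⊆ interior P := by
  intro q hq
  by_contra hqint
  obtain ⟨w, hw, hwp, hwp'⟩ := exists_endpoints_mem_toExposed_of_notMem_interior hB.convex
    hB.interior_nonempty hpp'.left_mem (hB.sub_mem _ hpp'.symm.left_mem) hq hqint
  exact hcard.not_ge (hpp'.encard_extremePoints_le_four hB hw hwp hwp')

include hB in
theorem add_smul_mem_interior (hcard : 4 < (P.extremePoints ℝ).encard) {s t : ℝ} (hs0 : 0 ≤ s)
    (hs1 : s ≤ 1) (ht0 : 0 < t) (ht1 : t < 1) :
    p + s • (p' - p) + t • (d - p - p') ∈ interior P := by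
  have hleft : p + t • (d - p - p') ∈ interior P :=
    hpp'.openSegment_subset_interior hB hcard ⟨1 - t, t, by linarith, ht0, by ring, by module⟩
  have hright : p' + t • (d - p - p') ∈ interior P :=
    hpp'.symm.openSegment_subset_interior hB hcard ⟨1 - t, t, by linarith, ht0, by ring, by module⟩
  convert hB.convex.interior hleft hright (sub_nonneg.2 hs1) hs0 (sub_add_cancel 1 s) using 1
  module

include hB in
theorem exists_strip_coordinates (hq : q ∈ P) (hqp : q ∉ segment ℝ p p')
    (hqd : q ∉ segment ℝ (d - p) (d - p')) :
    ∃ s t : ℝ, 0 < t ∧ t < 1 ∧ q = p + s • (p' - p) + t • (d - p - p') := by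
  obtain ⟨s, t, hst⟩ := hpp'.exists_coordinates hB q
  have hfn := hpp'.apply_inward_neg hB
  have hfq : f q < f p := (hpp'.apply_le hq).lt_of_ne fun h => hqp (hpp'.mem_segment_iff.2 ⟨hq, h⟩)
  have hfq' : f (d - q) < f p := (hpp'.apply_le (hB.sub_mem _ hq)).lt_of_ne fun h => hqd <| by
    simpa using (sub_mem_segment_sub_iff d (d - q) p p').2
      (hpp'.mem_segment_iff.2 ⟨hB.sub_mem _ hq, h⟩)
  refine ⟨s, t, ?_, ?_, hst⟩ <;>
  · have hfp' := hpp'.apply_right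
    rw [hst] at hfq hfq'
    simp only [map_add, map_sub, map_smul, smul_eq_mul, hfp'] at hfn hfq hfq'
    nlinarith

include hB in
theorem mem_inwardFrontier_or_mem_inwardFrontier (hcard : 4 < (P.extremePoints ℝ).encard)
    (hq : q ∈ frontier P) (hqp : q ∉ segment ℝ p p') (hqd : q ∉ segment ℝ (d - p) (d - p')) :
    q ∈ inwardFrontier P (p' - p) ∨ q ∈ inwardFrontier P (p - p') := by
  have hqP : q ∈ P := hB.isCompact.isClosed.frontier_subset hq
  obtain ⟨s, t, ht0, ht1, rfl⟩ := hpp'.exists_strip_coordinates hB hqP hqp hqd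
  have hstrip {r : ℝ} (hr0 : 0 ≤ r) (hr1 : r ≤ 1) :=
    hpp'.add_smul_mem_interior hB hcard hr0 hr1 ht0 ht1
  rcases lt_or_ge s 0 with hs | hs
  · have hfar : p + s • (p' - p) + t • (d - p - p') + (1 - s) • (p' - p) ∈ interior P := by
      convert hstrip zero_le_one le_rfl using 1
      module
    have hs' : 1 ≤ 1 - s := by linarith
    have hmem := hB.convex.add_smul_mem_interior hqP hfar
      ⟨inv_pos.2 (one_pos.trans_le hs'), inv_le_one_of_one_le₀ hs'⟩
    exact .inl ⟨hq, by rwa [inv_smul_smul₀ (by linarith)] at hmem⟩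
  rcases lt_or_ge 1 s with hs' | hs'
  · have hfar : p + s • (p' - p) + t • (d - p - p') + s • (p - p') ∈ interior P := by
      convert hstrip le_rfl zero_le_one using 1
      module
    have hmem := hB.convex.add_smul_mem_interior hqP hfar
      ⟨inv_pos.2 (one_pos.trans hs'), inv_le_one_of_one_le₀ hs'.le⟩
    exact .inr ⟨hq, by rwa [inv_smul_smul₀ (by linarith)] at hmem⟩
  · exact absurd (hstrip hs hs') hq.2

include hB in
theorem extremePoints_subset (hcard : 4 < (P.extremePoints ℝ).encard) :
    P.extremePoints ℝ ⊆
      {p, p'} ∪ {d - p, d - p'} ∪ (inwardFrontier P (p' - p) ∪ inwardFrontier P (p - p')) := by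
  intro q hq
  have hqint : q ∉ interior P := by
    have : Nontrivial E := ⟨p, p', hpp'.ne⟩
    exact (disjoint_interior_extremePoints P).notMem_of_mem_right hq
  have hendpoint {a b : E} (ha : a ∈ P) (hb : b ∈ P) (hqab : q ∈ segment ℝ a b) :
      q = a ∨ q = b :=
    ((mem_extremePoints_iff_forall_segment.1 hq).2 a ha b hb hqab).imp Eq.symm Eq.symm
  have hp := hpp'.left_mem
  have hp' := hpp'.symm.left_mem
  by_cases hqp : q ∈ segment ℝ p p'
  · exact .inl (.inl (hendpoint hp hp' hqp))
  by_cases hqd : q ∈ segment ℝ (d - p) (d - p')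
  · exact .inl (.inr (hendpoint (hB.sub_mem _ hp) (hB.sub_mem _ hp') hqd))
  · exact .inr (hpp'.mem_inwardFrontier_or_mem_inwardFrontier hB hcard
      ⟨subset_closure hq.1, hqint⟩ hqp hqd)

end IsExposedEdge

/-- The points `q` for which the displacements `lexGerm (p' - p) (d - p - p')` lead from `q` into
the interior of `P`, when `[p, p']` is an edge of `P`. -/
def edgeGermSet (P : Set E) (p p' : E) : Set E :=
  interior P ∪ inwardFrontier P (p' - p) ∪ segment ℝ p p' \ {p'}

namespace IsExposedEdge

variable (hpp' : IsExposedEdge P f p p') (hB : IsSymmetricConvexBody P d)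
include hpp' hB

theorem eventually_add_mem_interior (hcard : 4 < (P.extremePoints ℝ).encard)
    (hq : q ∈ edgeGermSet P p p') :
    ∀ᶠ y in lexGerm (p' - p) (d - p - p'), q + y ∈ interior P := by
  rcases hq with (hq | hq) | ⟨hq, hqp'⟩
  · exact eventually_add_mem_of_le_nhds_zero lexGerm_le_nhds_zero isOpen_interior hq
  · refine eventually_lexGerm_add_mem isOpen_interior ?_
    filter_upwards [Ioo_mem_nhdsGT one_pos] with e he
    refine mem_interior_of_mem_segment_inwardFrontier hB.convex hq ?_ ?_
    · rw [segment_eq_image']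
      exact ⟨e, ⟨he.1.le, he.2.le⟩, by simp⟩
    · simp [he.1.ne', sub_eq_zero, hpp'.ne.symm]
  · rw [segment_eq_image'] at hq
    obtain ⟨s, ⟨hs0, hs1⟩, rfl⟩ := hq
    have hs1' : s < 1 := hs1.lt_of_ne (by rintro rfl; simp at hqp')
    rw [eventually_lexGerm]
    filter_upwards [Ioo_mem_nhdsGT (sub_pos.2 hs1')] with e he
    filter_upwards [Ioo_mem_nhdsGT one_pos] with t ht
    convert hpp'.add_smul_mem_interior hB hcard (s := s + e) (add_nonneg hs0 he.1.le)
      (by linarith [he.2]) ht.1 ht.2 using 1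
    module

theorem eventually_add_notMem (hcard : 4 < (P.extremePoints ℝ).encard)
    (hq : q ∉ edgeGermSet P p p') : ∀ᶠ y in lexGerm (p' - p) (d - p - p'), q + y ∉ P := by
  obtain ⟨⟨hqint, hqg⟩, hqp⟩ : (q ∉ interior P ∧ q ∉ inwardFrontier P (p' - p)) ∧
      (q ∈ segment ℝ p p' → q = p') := by simpa [edgeGermSet] using hq
  have hopen : IsOpen Pᶜ := hB.isCompact.isClosed.isOpen_compl
  by_cases hqP : q ∈ P
  swap
  · exact eventually_add_mem_of_le_nhds_zero lexGerm_le_nhds_zero hopen hqP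
  by_cases hseg : q ∈ segment ℝ p p'
  · rw [hqp hseg]
    refine eventually_lexGerm_add_mem hopen ?_
    filter_upwards [self_mem_nhdsWithin] with e he using hpp'.right_add_smul_notMem he
  by_cases hopp : q ∈ segment ℝ (d - p) (d - p')
  · have hfq : f (d - q) = f p := by
      rw [← sub_sub_cancel d q, sub_mem_segment_sub_iff] at hopp
      exact (hpp'.mem_segment_iff.1 hopp).2
    have hfn := hpp'.apply_inward_neg hB
    rw [eventually_lexGerm]
    refine .of_forall fun e => ?_
    filter_upwards [self_mem_nhdsWithin] with t ht hmem
    have hle := hpp'.apply_le (hB.sub_mem _ hmem)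
    have hft := mul_neg_of_pos_of_neg ht hfn
    simp only [map_add, map_sub, map_smul, smul_eq_mul, hpp'.apply_right] at *
    linarith
  · have hback := (hpp'.mem_inwardFrontier_or_mem_inwardFrontier hB hcard
      ⟨subset_closure hqP, hqint⟩ hseg hopp).resolve_left hqg
    refine eventually_lexGerm_add_mem hopen ?_
    filter_upwards [self_mem_nhdsWithin] with e he
    convert sub_smul_notMem_of_mem_inwardFrontier hB.convex hback he using 2
    module

end IsExposedEdge

end Plane

section Connectivity

variable {E α : Type*} [NormedAddCommGroup E] [NormedSpace ℝ E] {V : Finset E}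

theorem mem_toExposed_convexHull_iff {f : StrongDual ℝ E} {v : E} (hv : v ∈ V) :
    v ∈ f.toExposed (convexHull ℝ (V : Set E)) ↔ ∀ u ∈ V, f u ≤ f v := by
  refine ⟨fun h u hu => h.2 u (subset_convexHull ℝ _ hu), fun h => ⟨subset_convexHull ℝ _ hv, ?_⟩⟩
  exact convexHull_min (t := {y | f y ≤ f v}) h (convex_halfSpace_le f.isLinear _)

theorem eventually_mem_toExposed_imp (f : StrongDual ℝ E) :
    ∀ᶠ w in 𝓝 f, ∀ v ∈ V, v ∈ w.toExposed (convexHull ℝ (V : Set E)) →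
      v ∈ f.toExposed (convexHull ℝ (V : Set E)) := by
  refine (eventually_all_finset V).2 fun v hv => ?_
  by_cases hvf : v ∈ f.toExposed (convexHull ℝ (V : Set E))
  · exact .of_forall fun _ _ => hvf
  obtain ⟨u, hu, hlt⟩ : ∃ u ∈ V, f v < f u := by
    simpa [mem_toExposed_convexHull_iff hv] using hvf
  have hopen : IsOpen {w : StrongDual ℝ E | w v < w u} :=
    isOpen_lt (by fun_prop) (by fun_prop)
  filter_upwards [hopen.mem_nhds hlt] with w hw hvw
  exact absurd ((mem_toExposed_convexHull_iff hv).1 hvw u hu) hw.not_ge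

theorem connectedSpace_strongDual_ne_zero [FiniteDimensional ℝ E] (hE : 1 < finrank ℝ E) :
    ConnectedSpace {f : StrongDual ℝ E // f ≠ 0} := by
  refine Subtype.connectedSpace (isConnected_compl_singleton_of_one_lt_rank ?_ 0)
  rw [← LinearMap.toContinuousLinearMap.rank_eq, ← finrank_eq_rank, Subspace.dual_finrank_eq]
  exact_mod_cast hE

-- While a functional varies in the connected space of nonzero functionals, its set of maximizing
-- vertices only shrinks locally, and two simultaneous maximizers span an edge.
theorem forall_vertex_eq_of_forall_isExposedEdge_eq [Fact (finrank ℝ E = 2)]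
    (hV : ↑V ⊆ (convexHull ℝ (V : Set E)).extremePoints ℝ)
    (hint : (interior (convexHull ℝ (V : Set E))).Nonempty) {C : E → α}
    (hC : ∀ f p p', IsExposedEdge (convexHull ℝ (V : Set E)) f p p' → C p = C p') {p p' : E}
    (hp : p ∈ V) (hp' : p' ∈ V) : C p = C p' := by
  have hdim : finrank ℝ E = 2 := Fact.out
  have : FiniteDimensional ℝ E := .of_finrank_pos (by omega)
  have : Nontrivial E := nontrivial_of_finrank_pos (R := ℝ) (by omega)
  have := connectedSpace_strongDual_ne_zero (E := E) (by omega)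
  set P := convexHull ℝ (V : Set E)
  have heq : ∀ f : StrongDual ℝ E, f ≠ 0 → ∀ u ∈ V, ∀ v ∈ V, u ∈ f.toExposed P →
      v ∈ f.toExposed P → C u = C v := by
    intro f hf u hu v hv hfu hfv
    by_cases huv : u = v
    · rw [huv]
    · exact hC f u v ⟨hf, huv, toExposed_eq_segment (convex_convexHull ℝ _) hf huv (hV hu)
        (hV hv) hfu hfv⟩
  have hmax : ∀ f : {f : StrongDual ℝ E // f ≠ 0}, ∃ v ∈ V, v ∈ f.1.toExposed P := fun f => by
    obtain ⟨v, hv, hfv⟩ := V.exists_max_image f.1 ⟨p, hp⟩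
    exact ⟨v, hv, (mem_toExposed_convexHull_iff hv).2 hfv⟩
  choose D hDV hD using hmax
  have hconst : ∀ f w : {f : StrongDual ℝ E // f ≠ 0}, C (D f) = C (D w) := by
    refine IsLocallyConstant.apply_eq_of_preconnectedSpace (f := C ∘ D)
      ((IsLocallyConstant.iff_eventually_eq _).2 fun f => ?_)
    filter_upwards [continuous_subtype_val.continuousAt.eventually
      (eventually_mem_toExposed_imp f.1)] with w hw
    exact heq f f.2 _ (hDV w) _ (hDV f) (hw _ (hDV w) (hD w)) (hD f)
  have hexp : ∀ q ∈ V, ∃ f, C q = C (D f) := fun q hq => by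
    obtain ⟨f, hf, hfq⟩ := exists_mem_toExposed_of_notMem_interior (convex_convexHull ℝ _) hint
      (hV hq).1 ((disjoint_interior_extremePoints P).notMem_of_mem_right (hV hq))
    exact ⟨⟨f, hf⟩, heq f hf q hq _ (hDV _) hfq (hD ⟨f, hf⟩)⟩
  obtain ⟨f, hf⟩ := hexp p hp
  obtain ⟨f', hf'⟩ := hexp p' hp'
  rw [hf, hf', hconst f f']

end Connectivity

section TranslateCount

/-- The number of indices `i` for which `v` lies in the translate `S + x i`. -/
noncomputable def translateCount {ι E : Type*} [AddCommGroup E] (x : ι → E) (v : E) (S : Set E) :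
    ℕ :=
  {i | v - x i ∈ S}.ncard

variable {ι E : Type*}

theorem translateCount_union_le [AddCommGroup E] {x : ι → E} {S T : Set E} {v : E} :
    translateCount x v (S ∪ T) ≤ translateCount x v S + translateCount x v T :=
  Set.ncard_union_le _ _

variable [SeminormedAddCommGroup E] {x : ι → E} {S T : Set E} {v : E}
  (hx : ∀ R : ℝ, {i | ‖x i‖ ≤ R}.Finite)
include hx

theorem finite_setOf_sub_mem (hS : Bornology.IsBounded S) (v : E) : {i | v - x i ∈ S}.Finite := by
  obtain ⟨R, hR⟩ := hS.exists_norm_le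
  refine (hx (‖v‖ + R)).subset fun i hi => ?_
  calc ‖x i‖ = ‖v - (v - x i)‖ := by rw [sub_sub_cancel]
    _ ≤ ‖v‖ + ‖v - x i‖ := norm_sub_le _ _
    _ ≤ ‖v‖ + R := by gcongr; exact hR _ hi

theorem translateCount_mono (hT : Bornology.IsBounded T) (hST : S ⊆ T) :
    translateCount x v S ≤ translateCount x v T :=
  Set.ncard_le_ncard (fun _ hi => hST hi) (finite_setOf_sub_mem hx hT v)

theorem translateCount_union (hS : Bornology.IsBounded S) (hT : Bornology.IsBounded T)
    (hST : Disjoint S T) :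
    translateCount x v (S ∪ T) = translateCount x v S + translateCount x v T :=
  Set.ncard_union_eq (hST.preimage (v - x ·)) (finite_setOf_sub_mem hx hS v)
    (finite_setOf_sub_mem hx hT v)

theorem translateCount_coe_finset (V : Finset E) :
    translateCount x v V = ∑ z ∈ V, translateCount x v {z} := by
  classical
  induction V using Finset.induction_on with
  | empty => simp [translateCount]
  | insert z V hz ih =>
    rw [Finset.sum_insert hz, ← ih, Finset.coe_insert, Set.insert_eq,
      translateCount_union hx Bornology.isBounded_singleton V.finite_toSet.isBounded
        (Set.disjoint_singleton_left.2 hz)]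

theorem translateCount_singleton_sub_pos (v : E) (j : ι) : 0 < translateCount x v {v - x j} :=
  (Set.ncard_pos (finite_setOf_sub_mem hx Bornology.isBounded_singleton v)).2 ⟨j, rfl⟩

end TranslateCount

instance fact_finrank_plane_eq_two : Fact (finrank ℝ (ℝ × ℝ) = 2) := ⟨by simp⟩

namespace IsKFoldTranslativeTiling

variable {ι : Type} {P : Set (ℝ × ℝ)} {x : ι → ℝ × ℝ} {k : ℕ} {f : StrongDual ℝ (ℝ × ℝ)}
  {d p p' : ℝ × ℝ} (htile : IsKFoldTranslativeTiling P x k)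
include htile

-- Far enough along the germ, `v + y` avoids the boundary of every translate, so that the covering
-- and the packing bound apply to the same set of indices.
theorem translateCount_eq_of_germ (hP : Bornology.IsBounded P) {l : Filter (ℝ × ℝ)} [NeBot l]
    (hl : l ≤ 𝓝 0) {A : Set (ℝ × ℝ)} (hin : ∀ q ∈ A, ∀ᶠ y in l, q + y ∈ interior P)
    (hout : ∀ q ∉ A, ∀ᶠ y in l, q + y ∉ P) (v : ℝ × ℝ) : translateCount x v A = k := by
  obtain ⟨hx, hcover, hpack⟩ := htile
  have hball := hl (Metric.ball_mem_nhds (0 : ℝ × ℝ) one_pos)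
  have hthick {q y : ℝ × ℝ} (hy : y ∈ Metric.ball 0 1) (hqy : q + y ∈ P) :
      q ∈ Metric.thickening 1 P :=
    Metric.mem_thickening_iff.2 ⟨q + y, hqy, by simpa using hy⟩
  have hA : A ⊆ Metric.thickening 1 P := fun q hq => by
    obtain ⟨y, hyP, hy⟩ := ((hin q hq).and hball).exists
    exact hthick hy (interior_subset hyP)
  have hfin := finite_setOf_sub_mem hx (hP.thickening (δ := 1)) v
  have hfinA : {i | v - x i ∈ A}.Finite := hfin.subset fun i hi => hA hi
  have hev : ∀ᶠ y in l, ∀ i ∈ {i | v - x i ∈ Metric.thickening 1 P},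
      (v - x i ∈ A → v - x i + y ∈ interior P) ∧ (v - x i ∉ A → v - x i + y ∉ P) := by
    refine (eventually_all_finite hfin).2 fun i _ => ?_
    by_cases hi : v - x i ∈ A
    · simpa [hi] using hin _ hi
    · simpa [hi] using hout _ hi
  obtain ⟨y, hy, hyball⟩ := (hev.and hball).exists
  have hsub (i : ι) : v + y - x i = v - x i + y := by abel
  apply le_antisymm
  · rw [translateCount, Set.ncard_eq_toFinset_card _ hfinA]
    refine hpack (v + y) _ fun i hi => ?_
    have hi' : v - x i ∈ A := by simpa using hi
    exact hsub i ▸ (hy i (hA hi')).1 hi'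
  · obtain ⟨s, hs, hsP⟩ := hcover (v + y)
    rw [translateCount]
    refine hs.trans ((Set.ncard_coe_finset s).ge.trans (Set.ncard_le_ncard (fun i hi => ?_) hfinA))
    have hiP : v - x i + y ∈ P := hsub i ▸ hsP i hi
    exact not_not.1 fun hi' => (hy i (hthick hyball hiP)).2 hi' hiP

variable (hB : IsSymmetricConvexBody P d) (hcard : 4 < (P.extremePoints ℝ).encard)
  (hpp' : IsExposedEdge P f p p')
include hB hcard hpp'

theorem translateCount_edge (v : ℝ × ℝ) :
    translateCount x v (interior P) + translateCount x v (inwardFrontier P (p' - p)) +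
      translateCount x v (segment ℝ p p') = k + translateCount x v {p'} := by
  have hbdd {S : Set (ℝ × ℝ)} (hS : S ⊆ P) : Bornology.IsBounded S :=
    hB.isCompact.isBounded.subset hS
  have hint : interior P ⊆ P := interior_subset
  have hinward : inwardFrontier P (p' - p) ⊆ P := inwardFrontier_subset hB.isCompact.isClosed
  have hseg : segment ℝ p p' \ {p'} ⊆ P := Set.sdiff_subset.trans hpp'.segment_subset
  have hend : translateCount x v (segment ℝ p p') =
      translateCount x v (segment ℝ p p' \ {p'}) + translateCount x v {p'} := by
    rw [← translateCount_union htile.1 (hbdd hseg) Bornology.isBounded_singleton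
      Set.disjoint_sdiff_left, Set.sdiff_union_of_subset]
    exact Set.singleton_subset_iff.2 (right_mem_segment ℝ p p')
  have hdisj : Disjoint (interior P ∪ inwardFrontier P (p' - p)) (segment ℝ p p' \ {p'}) :=
    (Set.disjoint_union_left.2 ⟨hpp'.disjoint_interior_segment,
      hpp'.disjoint_inwardFrontier_segment⟩).mono_right Set.sdiff_subset
  have hgerm : translateCount x v (edgeGermSet P p p') = k :=
    htile.translateCount_eq_of_germ (hbdd subset_rfl) lexGerm_le_nhds_zero
      (fun q => hpp'.eventually_add_mem_interior hB hcard)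
      (fun q => hpp'.eventually_add_notMem hB hcard) v
  rw [edgeGermSet, translateCount_union htile.1 (hbdd (Set.union_subset hint hinward))
    (hbdd hseg) hdisj, translateCount_union htile.1 (hbdd hint) (hbdd hinward)
    disjoint_interior_inwardFrontier] at hgerm
  rw [hend, ← hgerm, add_assoc _ (translateCount x v (segment ℝ p p' \ {p'}))]

theorem inwardFrontier_balance (v : ℝ × ℝ) :
    translateCount x v (inwardFrontier P (p' - p)) + translateCount x v {p} =
      translateCount x v (inwardFrontier P (p - p')) + translateCount x v {p'} := by
  have hedge := htile.translateCount_edge hB hcard hpp' v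
  have hedge' := htile.translateCount_edge hB hcard hpp'.symm v
  rw [segment_symm] at hedge'
  omega

theorem translateCount_add_antipode (v : ℝ × ℝ) :
    translateCount x v {p} + translateCount x v {d - p} =
      translateCount x v {p'} + translateCount x v {d - p'} := by
  have hbalance := htile.inwardFrontier_balance hB hcard hpp' v
  have hbalance' := htile.inwardFrontier_balance hB hcard (hpp'.reflect hB).symm v
  rw [sub_sub_sub_cancel_left, sub_sub_sub_cancel_left] at hbalance'
  omega

end IsKFoldTranslativeTiling

namespace IsConvexPolygon

variable {P : Set (ℝ × ℝ)} {V : Finset (ℝ × ℝ)} {a b c : ℝ × ℝ} (hP : IsConvexPolygon P V)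
include hP

theorem convex : Convex ℝ P := hP.1 ▸ convex_convexHull ℝ _

theorem extremePoints_eq : P.extremePoints ℝ = V :=
  subset_antisymm (by rw [hP.1]; exact extremePoints_convexHull_subset) hP.2.1

theorem isSymmetricConvexBody (hc : ∀ p ∈ P, 2 • c - p ∈ P) : IsSymmetricConvexBody P (2 • c) where
  convex := hP.convex
  isCompact := hP.1 ▸ V.finite_toSet.isCompact_convexHull ℝ
  interior_nonempty := hP.2.2
  sub_mem := hc

theorem exists_isExposedEdge (hab : IsEdge P V a b) : ∃ f, IsExposedEdge P f a b := by
  obtain ⟨ha, hb, hne, hfrontier⟩ := hab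
  have hmid : (1 / 2 : ℝ) • a + (1 / 2 : ℝ) • b ∈ openSegment ℝ a b :=
    ⟨_, _, one_half_pos, one_half_pos, add_halves 1, rfl⟩
  exact exists_isExposedEdge_of_mem_openSegment hP.convex hP.2.2 hne (hP.2.1 a ha) (hP.2.1 b hb)
    hmid (hfrontier (openSegment_subset_segment ℝ a b hmid)).2

end IsConvexPolygon

namespace IsKFoldTranslativeTiling

variable {ι : Type} {P : Set (ℝ × ℝ)} {V : Finset (ℝ × ℝ)} {x : ι → ℝ × ℝ} {k : ℕ}
  {f : StrongDual ℝ (ℝ × ℝ)} {d p p' : ℝ × ℝ} (htile : IsKFoldTranslativeTiling P x k)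
  (hP : IsConvexPolygon P V) (hB : IsSymmetricConvexBody P d)
  (hcard : 4 < (P.extremePoints ℝ).encard)
include htile hP hB hcard

theorem translateCount_add_antipode_eq_of_mem (hp : p ∈ V) (hp' : p' ∈ V) (v : ℝ × ℝ) :
    translateCount x v {p} + translateCount x v {d - p} =
      translateCount x v {p'} + translateCount x v {d - p'} := by
  obtain ⟨rfl, hext, hint⟩ := hP
  exact forall_vertex_eq_of_forall_isExposedEdge_eq hext hint
    (C := fun q => translateCount x v {q} + translateCount x v {d - q})
    (fun f q q' hqq' => htile.translateCount_add_antipode hB hcard hqq' v) hp hp'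

theorem two_mul_translateCount_vertices (hp : p ∈ V) (v : ℝ × ℝ) :
    2 * translateCount x v V =
      V.card * (translateCount x v {p} + translateCount x v {d - p}) := by
  have hreflect {q : ℝ × ℝ} (hq : q ∈ V) : d - q ∈ V := by
    rw [← Finset.mem_coe, ← hP.extremePoints_eq] at hq ⊢
    exact hB.sub_mem_extremePoints hq
  calc 2 * translateCount x v V
      = ∑ q ∈ V, translateCount x v {q} + ∑ q ∈ V, translateCount x v {d - q} := by
        rw [two_mul, translateCount_coe_finset htile.1]
        congr 1
        exact Finset.sum_nbij' (d - ·) (d - ·) (fun _ => hreflect) (fun _ => hreflect)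
          (by simp) (by simp) (by simp)
    _ = ∑ _ ∈ V, (translateCount x v {p} + translateCount x v {d - p}) := by
        rw [← Finset.sum_add_distrib]
        exact Finset.sum_congr rfl fun q hq =>
          htile.translateCount_add_antipode_eq_of_mem hP hB hcard hq hp v
    _ = V.card * (translateCount x v {p} + translateCount x v {d - p}) := by
        rw [Finset.sum_const, smul_eq_mul]

theorem translateCount_vertices_le (hpp' : IsExposedEdge P f p p') (v : ℝ × ℝ) :
    translateCount x v V ≤
      translateCount x v {p} + translateCount x v {p'} +
        (translateCount x v {d - p} + translateCount x v {d - p'}) +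
        (translateCount x v (inwardFrontier P (p' - p)) +
          translateCount x v (inwardFrontier P (p - p'))) := by
  have hinward (g : ℝ × ℝ) : Bornology.IsBounded (inwardFrontier P g) :=
    hB.isCompact.isBounded.subset (inwardFrontier_subset hB.isCompact.isClosed)
  have hsub := hP.extremePoints_eq ▸ hpp'.extremePoints_subset hB hcard
  refine (translateCount_mono htile.1 ?_ hsub).trans ?_
  · simp [Bornology.isBounded_union, hinward]
  · iterate 2 refine translateCount_union_le.trans (add_le_add ?_ ?_)
    all_goals exact translateCount_union_le

theorem vertices_card_mul_le (hpp' : IsExposedEdge P f p p') (hp : p ∈ V) (v : ℝ × ℝ) :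
    V.card * (translateCount x v {p} + translateCount x v {d - p}) ≤
      4 * translateCount x v (inwardFrontier P (p' - p)) +
        6 * (translateCount x v {p} + translateCount x v {d - p}) := by
  have hsum := htile.two_mul_translateCount_vertices hP hB hcard hp v
  have hle := htile.translateCount_vertices_le hP hB hcard hpp' v
  have hbalance := htile.inwardFrontier_balance hB hcard hpp' v
  have hantipode := htile.translateCount_add_antipode hB hcard hpp' v
  omega

theorem vertices_card_le (hpp' : IsExposedEdge P f p p') (hp : p ∈ V) {v : ℝ × ℝ} {j : ι}
    (hv : v - x j ∈ V) : V.card ≤ 4 * translateCount x v (inwardFrontier P (p' - p)) + 6 := by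
  have hle := htile.vertices_card_mul_le hP hB hcard hpp' hp v
  have hpos := translateCount_singleton_sub_pos htile.1 v j
  have hconst := htile.translateCount_add_antipode_eq_of_mem hP hB hcard hp hv v
  set c := translateCount x v {p} + translateCount x v {d - p}
  have hc : 0 < c := by omega
  refine Nat.le_of_mul_le_mul_right (hle.trans ?_) hc
  rw [add_mul]
  exact Nat.add_le_add_right (Nat.le_mul_of_pos_right _ hc) _

end IsKFoldTranslativeTiling

/-- Lemma 1: let `m ≥ 4`, let `P` be a centrally symmetric convex `2m`-gon and let
`P + X` be a `k`-fold translative tiling of the plane. If `v` is a vertex of the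
translate `P + x j` and `[v, w]` is an edge of the translate `P + x j'`, then there are
at least `⌈(m-3)/2⌉` distinct indices `i` such that `v ∈ ∂(P) + x i` and
`[v, w] \ {v} ⊆ int(P) + x i`. -/
theorem edge_covered_by_interiors (m : ℕ) (hm : 4 ≤ m)
    (P : Set (ℝ × ℝ)) (V : Finset (ℝ × ℝ))
    (hP : IsConvexPolygon P V) (hV : V.card = 2 * m) (hsym : IsCentrallySymmetric P)
    (k : ℕ) (hk : 0 < k) (ι : Type) (x : ι → ℝ × ℝ)
    (htile : IsKFoldTranslativeTiling P x k)
    (v : ℝ × ℝ) (j : ι) (hv : v - x j ∈ V)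
    (w : ℝ × ℝ) (j' : ι) (hG : IsEdge P V (v - x j') (w - x j')) :
    ∃ s : Finset ι, (m - 3 + 1) / 2 ≤ s.card ∧
      ∀ i ∈ s, v - x i ∈ frontier P ∧
        ∀ p ∈ segment ℝ v w \ {v}, p - x i ∈ interior P := by
  obtain ⟨c, hc⟩ := hsym
  have hB := hP.isSymmetricConvexBody hc
  obtain ⟨f, hedge⟩ := hP.exists_isExposedEdge hG
  have hcard : 4 < (P.extremePoints ℝ).encard := by
    rw [hP.extremePoints_eq, Set.encard_coe_eq_coe_finsetCard, hV]
    exact_mod_cast (by omega : 4 < 2 * m)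
  have hbound := htile.vertices_card_le hP hB hcard hedge hG.1 hv
  rw [sub_sub_sub_cancel_right] at hbound
  have hfin := finite_setOf_sub_mem htile.1 (hB.isCompact.isBounded.subset
    (inwardFrontier_subset (g := w - v) hB.isCompact.isClosed)) v
  refine ⟨hfin.toFinset, ?_, fun i hi => ?_⟩
  · rw [translateCount, Set.ncard_eq_toFinset_card _ hfin] at hbound
    omega
  · have hvi : v - x i ∈ inwardFrontier P (w - v) := hfin.mem_toFinset.1 hi
    refine ⟨hvi.1, fun p ⟨hp, hpv⟩ => ?_⟩
    refine mem_interior_of_mem_segment_inwardFrontier hB.convex hvi ?_ (by simpa using hpv)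
    rw [sub_add_sub_cancel', sub_eq_neg_add, sub_eq_neg_add, sub_eq_neg_add p]
    exact (mem_segment_translate ℝ (-x i)).2 hp
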